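/- arXiv:2208.06862 — 2 statements merged into one kernel-verified Lean document; each statement's English description precedes it below -/
import Mathlib

section
/- Let p be an odd prime and let Λ = ℤ_p⟦T⟧ be the ring of formal power series over the p-adic integers. Let X be a finitely generated torsion Λ-module containing no nonzero finite Λ-submodules. Then μ(X) + λ(X) ≥ g(X), where λ(X) denotes the ℤ_p-rank of X, μ(X) denotes the sum over i ≥ 0 of the torsion-free ranks of the 𝔽_p⟦T⟧-modules p^i X / p^{i+1} X, and g(X) denotes the dimension of X/𝔐X over the residue field Λ/𝔐 ≅ 𝔽_p, with 𝔐 = (p, T) the maximal ideal of Λ. -/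
open Pointwise TensorProduct

set_option synthInstance.maxHeartbeats 1000000
set_option maxHeartbeats 1000000

/-- The Iwasawa algebra `Λ = ℤ_p⟦T⟧`. -/
noncomputable abbrev IwasawaAlgebra (p : ℕ) [Fact p.Prime] : Type :=
  PowerSeries ℤ_[p]

/-- The maximal ideal `𝔐 = (p, T)` of `Λ`. -/
noncomputable def maxIdeal (p : ℕ) [Fact p.Prime] : Ideal (IwasawaAlgebra p) :=
  Ideal.span {(p : IwasawaAlgebra p), PowerSeries.X}

/-- `Ω = Λ/pΛ ≅ 𝔽_p⟦T⟧`. -/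
noncomputable abbrev OmegaAlgebra (p : ℕ) [Fact p.Prime] : Type :=
  IwasawaAlgebra p ⧸ Ideal.span {(p : IwasawaAlgebra p)}

/-- the submodule `p^i X` of a `Λ`-module `X`. -/
noncomputable def pPowSub (p : ℕ) [Fact p.Prime] (X : Type) [AddCommGroup X]
    [Module (IwasawaAlgebra p) X] (i : ℕ) : Submodule (IwasawaAlgebra p) X :=
  (p : IwasawaAlgebra p) ^ i • ⊤

/-- the quotient `p^i X / p^{i+1} X`, a module over `Ω = Λ/pΛ`. -/
noncomputable abbrev pGraded (p : ℕ) [Fact p.Prime] (X : Type) [AddCommGroup X]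
    [Module (IwasawaAlgebra p) X] (i : ℕ) : Type :=
  (pPowSub p X i) ⧸
    (Ideal.span {(p : IwasawaAlgebra p)} • (⊤ : Submodule (IwasawaAlgebra p) (pPowSub p X i)))

/-- `μ(X) = Σ_i rank_{Ω}(p^i X / p^{i+1} X)`, the rank over the domain `Ω` being the
dimension over its fraction field after base change. -/
noncomputable def muInv (p : ℕ) [Fact p.Prime] (X : Type) [AddCommGroup X]
    [Module (IwasawaAlgebra p) X] : Cardinal :=
  Cardinal.sum fun i : ℕ =>
    Module.rank (FractionRing (OmegaAlgebra p))
      (FractionRing (OmegaAlgebra p) ⊗[OmegaAlgebra p] pGraded p X i)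

/-- `λ(X) = dim_{ℚ_p}(X ⊗_{ℤ_p} ℚ_p)`, the `ℤ_p`-rank of `X`. -/
noncomputable def lambdaInv (p : ℕ) [Fact p.Prime] (X : Type) [AddCommGroup X]
    [Module ℤ_[p] X] : Cardinal :=
  Module.rank ℚ_[p] (ℚ_[p] ⊗[ℤ_[p]] X)

/-- `g(X) = dim_{Λ/𝔐}(X/𝔐X)`. -/
noncomputable def gInv (p : ℕ) [Fact p.Prime] (X : Type) [AddCommGroup X]
    [Module (IwasawaAlgebra p) X] : Cardinal :=
  Module.rank (IwasawaAlgebra p ⧸ maxIdeal p)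
    (X ⧸ (maxIdeal p • (⊤ : Submodule (IwasawaAlgebra p) X)))


/-- Multiplication by `a`, as a linear map onto `a • ⊤`. -/
def smulRestrict {R M : Type*} [CommRing R] [AddCommGroup M] [Module R M] (a : R)
    (N : Submodule R M) : N →ₗ[R] (a • N : Submodule R M) :=
  (LinearMap.lsmul R M a).restrict fun _ hx ↦ Submodule.smul_mem_pointwise_smul _ a N hx

theorem smulRestrict_surjective {R M : Type*} [CommRing R] [AddCommGroup M] [Module R M] (a : R)
    (N : Submodule R M) : Function.Surjective (smulRestrict a N) := by
  rintro ⟨y, x, hx, rfl⟩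
  exact ⟨⟨x, hx⟩, rfl⟩

theorem rank_eq_zero_of_smul_eq_zero {R M : Type*} [CommRing R] (I : Ideal R) [IsDomain (R ⧸ I)]
    [AddCommGroup M] [Module R M] [Module (R ⧸ I) M] [IsScalarTower R (R ⧸ I) M] {s : R}
    (hs : s ∉ I) (h : ∀ x : M, s • x = 0) : Module.rank (R ⧸ I) M = 0 := by
  refine rank_eq_zero_iff.2 fun x ↦ ⟨Ideal.Quotient.mk I s, ?_, ?_⟩
  · rwa [Ne, Ideal.Quotient.eq_zero_iff_mem]
  · rw [← h x, ← Ideal.Quotient.algebraMap_eq, algebraMap_smul]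

theorem rank_torsionBy_le {R : Type*} [CommRing R] (a : R) [IsDomain (R ⧸ Ideal.span {a})]
    {s : R} (hs : s ∉ Ideal.span {a}) (k : ℕ) (M : Type*) [AddCommGroup M] [Module R M]
    (h : ∀ x : M, (a ^ k * s) • x = 0) :
    Module.rank (R ⧸ Ideal.span {a}) (Submodule.torsionBy R M a) ≤
      Module.rank (R ⧸ Ideal.span {a}) (M ⧸ (Ideal.span {a} • (⊤ : Submodule R M))) := by
  induction k generalizing M with
  | zero =>
    rw [rank_eq_zero_of_smul_eq_zero (Ideal.span {a}) hs]
    · exact zero_le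
    · intro x
      ext
      simpa using h x
  | succ k ih =>
    have hsurj : Function.Surjective (algebraMap R (R ⧸ Ideal.span {a})) :=
      Ideal.Quotient.mk_surjective
    let M' : Submodule R M := a • ⊤
    let f := LinearMap.extendScalarsOfSurjective hsurj
      ((Ideal.span {a} • (⊤ : Submodule R M)).mkQ ∘ₗ (Submodule.torsionBy R M a).subtype)
    let m : M →ₗ[R] M' := smulRestrict a ⊤ ∘ₗ Submodule.topEquiv.symm.toLinearMap
    have hm : Function.Surjective m :=
      (smulRestrict_surjective a ⊤).comp Submodule.topEquiv.symm.surjective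
    let g := LinearMap.extendScalarsOfSurjective hsurj
      (Submodule.mapQ (Ideal.span {a} • (⊤ : Submodule R M))
        (Ideal.span {a} • (⊤ : Submodule R M')) m (by
          rw [Submodule.smul_le]
          intro r hr x _
          rw [Submodule.mem_comap, map_smul]
          exact Submodule.smul_mem_smul hr trivial))
    have hg : Function.Surjective g := by
      intro y
      obtain ⟨y, rfl⟩ := Submodule.mkQ_surjective _ y
      obtain ⟨x, rfl⟩ := hm y
      exact ⟨Submodule.Quotient.mk x, rfl⟩
    have hfg : LinearMap.range f ≤ LinearMap.ker g := by
      rintro _ ⟨x, rfl⟩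
      have : m x = 0 := Subtype.ext x.2
      change Submodule.Quotient.mk (m x) = _
      rw [this]
      rfl
    have hker : ∀ x : LinearMap.ker f, (x : M) ∈ M' := by
      intro x
      have h1 : (Submodule.Quotient.mk (x : M) : M ⧸ (Ideal.span {a} • (⊤ : Submodule R M))) = 0 :=
        x.2
      rw [Submodule.Quotient.mk_eq_zero] at h1
      exact (Submodule.ideal_span_singleton_smul a ⊤).le h1
    let i : LinearMap.ker f →ₗ[R ⧸ Ideal.span {a}] Submodule.torsionBy R M' a :=
      LinearMap.extendScalarsOfSurjective hsurj
        { toFun := fun x ↦ ⟨⟨x, hker x⟩, Subtype.ext x.1.2⟩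
          map_add' := fun _ _ ↦ rfl
          map_smul' := fun _ _ ↦ rfl }
    have hi : Function.Injective i := by
      intro x y hxy
      have : i x = i y := hxy
      have h1 := congrArg (fun z : Submodule.torsionBy R M' a ↦ (z.1.1 : M)) this
      exact Subtype.ext (Subtype.ext h1)
    have hM' : ∀ y : M', (a ^ k * s) • y = 0 := by
      intro y
      obtain ⟨x, rfl⟩ := hm y
      ext
      have := h x
      rw [pow_succ, mul_right_comm, mul_smul] at this
      exact this
    rw [← f.rank_range_add_rank_ker, ← g.rank_range_add_rank_ker,
      rank_range_of_surjective g hg, add_comm]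
    exact add_le_add ((LinearMap.rank_le_of_injective i hi).trans (ih M' hM'))
      (Submodule.rank_mono hfg)

theorem Cardinal.sum_range_le_sum (f : ℕ → Cardinal) (n : ℕ) :
    ∑ i ∈ Finset.range n, f i ≤ Cardinal.sum f := by
  induction n generalizing f with
  | zero => simp
  | succ n ih =>
    rw [Finset.sum_range_succ', add_comm, Cardinal.sum_nat_eq_add_sum_succ]
    exact add_le_add_right (ih _) _

open Cardinal in
/-- `M` is generated over `R` by at most `c` elements. -/
def GeneratedBy (R : Type*) (M : Type v) [Semiring R] [AddCommMonoid M] [Module R M]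
    (c : Cardinal.{v}) : Prop :=
  ∃ s : Set M, Submodule.span R s = ⊤ ∧ #s ≤ c

theorem GeneratedBy.mono {R : Type*} {M : Type v} [Semiring R] [AddCommMonoid M] [Module R M]
    {c d : Cardinal.{v}} (h : GeneratedBy R M c) (hcd : c ≤ d) : GeneratedBy R M d :=
  let ⟨s, hs, hc⟩ := h
  ⟨s, hs, hc.trans hcd⟩

theorem GeneratedBy.map {R : Type*} {M N : Type v} [Semiring R] [AddCommMonoid M]
    [AddCommMonoid N] [Module R M] [Module R N] (f : M →ₗ[R] N) (hf : Function.Surjective f)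
    {c : Cardinal.{v}} (h : GeneratedBy R M c) : GeneratedBy R N c := by
  obtain ⟨s, hs, hc⟩ := h
  refine ⟨f '' s, ?_, Cardinal.mk_image_le.trans hc⟩
  rw [← Submodule.map_span, hs, Submodule.map_top, LinearMap.range_eq_top.2 hf]

theorem GeneratedBy.of_surjective {R : Type*} {M N : Type v} [Ring R] [AddCommGroup M]
    [AddCommGroup N] [Module R M] [Module R N] (f : M →ₗ[R] N) (hf : Function.Surjective f)
    {c d : Cardinal.{v}} (hc : GeneratedBy R (LinearMap.ker f) c) (hd : GeneratedBy R N d) :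
    GeneratedBy R M (c + d) := by
  obtain ⟨s, hs, hc⟩ := hc
  obtain ⟨t, ht, hd⟩ := hd
  refine ⟨Subtype.val '' s ∪ Function.surjInv hf '' t, ?_,
    (Cardinal.mk_union_le _ _).trans
      (add_le_add (Cardinal.mk_image_le.trans hc) (Cardinal.mk_image_le.trans hd))⟩
  set S := Submodule.span R (Subtype.val '' s ∪ Function.surjInv hf '' t)
  have h1 : LinearMap.ker f ≤ S := by
    have : Submodule.map (LinearMap.ker f).subtype (Submodule.span R s) ≤ S := by
      rw [Submodule.map_span]
      exact Submodule.span_mono Set.subset_union_left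
    simpa [hs] using this
  have h2 : S.map f = ⊤ := by
    rw [eq_top_iff, ← ht, Submodule.span_le]
    intro y hy
    exact ⟨Function.surjInv hf y, Submodule.subset_span (Or.inr ⟨y, hy, rfl⟩),
      Function.surjInv_eq hf y⟩
  rw [← sup_eq_left.2 h1, ← Submodule.comap_map_eq, h2, Submodule.comap_top]

theorem GeneratedBy.of_free {R S M : Type*} [CommRing R] [StrongRankCondition R] [CommRing S]
    [Algebra R S] [AddCommGroup M] [Module R M] [Module S M] [IsScalarTower R S M] [Module.Free R M] :
    GeneratedBy S M (Module.rank R M) := by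
  let b := Module.Free.chooseBasis R M
  refine ⟨Set.range b, ?_, ?_⟩
  · rw [eq_top_iff, ← Submodule.restrictScalars_le (S := R)]
    rw [Submodule.restrictScalars_top, ← b.span_eq]
    exact Submodule.span_le_restrictScalars R S _
  · rw [← b.mk_range_eq_rank]

theorem GeneratedBy.of_quotient {R M : Type*} [CommRing R] (I : Ideal R) [AddCommGroup M]
    [Module R M] [Module (R ⧸ I) M] [IsScalarTower R (R ⧸ I) M] {c : Cardinal}
    (h : GeneratedBy (R ⧸ I) M c) : GeneratedBy R M c := by
  obtain ⟨s, hs, hc⟩ := h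
  refine ⟨s, ?_, hc⟩
  rw [← Submodule.restrictScalars_span R (R ⧸ I) Ideal.Quotient.mk_surjective, hs,
    Submodule.restrictScalars_top]

theorem GeneratedBy.rank_quotient_le {R M : Type*} [CommRing R] (I : Ideal R)
    [Nontrivial (R ⧸ I)] [AddCommGroup M] [Module R M] {c : Cardinal} (h : GeneratedBy R M c) :
    Module.rank (R ⧸ I) (M ⧸ (I • (⊤ : Submodule R M))) ≤ c := by
  obtain ⟨s, hs, hc⟩ := h
  let q := (I • (⊤ : Submodule R M)).mkQ
  have : Submodule.span (R ⧸ I) (q '' s) = ⊤ := by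
    rw [eq_top_iff, ← Submodule.restrictScalars_le (S := R), Submodule.restrictScalars_top]
    refine le_trans ?_ (Submodule.span_le_restrictScalars R (R ⧸ I) _)
    rw [← Submodule.map_span, hs, Submodule.map_top, Submodule.range_mkQ]
  rw [← rank_top, ← this]
  exact (rank_span_le _).trans (Cardinal.mk_image_le.trans hc)


section Iwasawa

variable (p : ℕ) [Fact p.Prime]

theorem residue_natCast_self : IsLocalRing.residue ℤ_[p] p = 0 :=
  Ideal.Quotient.eq_zero_iff_mem.2 PadicInt.p_nonunit

theorem mem_span_p_iff (f : IwasawaAlgebra p) :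
    f ∈ Ideal.span {(p : IwasawaAlgebra p)} ↔
      f.map (IsLocalRing.residue ℤ_[p]) = 0 := by
  rw [Ideal.mem_span_singleton]
  constructor
  · rintro ⟨g, rfl⟩
    rw [map_mul, map_natCast, ← map_natCast (PowerSeries.C (R := _)),
      ← map_natCast (IsLocalRing.residue ℤ_[p]), residue_natCast_self, map_zero, zero_mul]
  · intro h
    have h' : ∀ n, (p : ℤ_[p]) ∣ PowerSeries.coeff n f := fun n ↦ by
      rw [← Ideal.mem_span_singleton, ← PadicInt.maximalIdeal_eq_span_p,
        ← IsLocalRing.residue_eq_zero_iff, ← PowerSeries.coeff_map, h, map_zero]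
    choose c hc using h'
    refine ⟨PowerSeries.mk c, PowerSeries.ext fun n ↦ ?_⟩
    rw [← map_natCast (PowerSeries.C (R := _)), PowerSeries.coeff_C_mul, PowerSeries.coeff_mk, hc]

instance : (Ideal.span {(p : IwasawaAlgebra p)}).IsPrime := by
  have : Ideal.span {(p : IwasawaAlgebra p)} =
      RingHom.ker (PowerSeries.map (IsLocalRing.residue ℤ_[p])) :=
    Ideal.ext (mem_span_p_iff p)
  rw [this]
  exact RingHom.ker_isPrime _

theorem maxIdeal_ne_top : maxIdeal p ≠ ⊤ := by
  have h : maxIdeal p ≤ RingHom.ker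
      ((IsLocalRing.residue ℤ_[p]).comp (PowerSeries.constantCoeff (R := ℤ_[p]))) := by
    rw [maxIdeal, Ideal.span_le]
    rintro x (rfl | rfl)
    · rw [SetLike.mem_coe, RingHom.mem_ker, RingHom.comp_apply, map_natCast, residue_natCast_self]
    · simp [RingHom.mem_ker]
  exact fun h' ↦ RingHom.ker_ne_top _ (top_le_iff.1 (h' ▸ h))

instance : Nontrivial (IwasawaAlgebra p ⧸ maxIdeal p) :=
  Ideal.Quotient.nontrivial_iff.2 (maxIdeal_ne_top p)

instance : IsLocalRing (OmegaAlgebra p) :=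
  .of_surjective' _ Ideal.Quotient.mk_surjective

instance : IsPrincipalIdealRing (OmegaAlgebra p) := by
  refine ((tfae_of_isNoetherianRing_of_isLocalRing_of_isDomain
    (OmegaAlgebra p)).out 0 4).2 ?_
  refine ⟨Ideal.Quotient.mk _ PowerSeries.X, le_antisymm ?_ ?_⟩
  · intro x hx
    obtain ⟨f, rfl⟩ := Ideal.Quotient.mk_surjective x
    have hc : PowerSeries.constantCoeff f ∈ IsLocalRing.maximalIdeal ℤ_[p] := fun hu ↦
      hx (((PowerSeries.isUnit_iff_constantCoeff).2 hu).map _)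
    rw [PadicInt.maximalIdeal_eq_span_p, Ideal.mem_span_singleton] at hc
    obtain ⟨c, hc⟩ := hc
    refine Ideal.mem_span_singleton.2
      ⟨Ideal.Quotient.mk _ (PowerSeries.mk fun n ↦ PowerSeries.coeff (n + 1) f), ?_⟩
    rw [← map_mul, Ideal.Quotient.eq]
    nth_rw 1 [PowerSeries.eq_X_mul_shift_add_const f]
    rw [add_sub_cancel_left, hc, map_mul, map_natCast]
    exact Ideal.mul_mem_right _ _ (Ideal.mem_span_singleton_self _)
  · refine (Ideal.span_singleton_le_iff_mem _).2 fun hu ↦ ?_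
    obtain ⟨y, hy⟩ := hu.exists_right_inv
    obtain ⟨g, rfl⟩ := Ideal.Quotient.mk_surjective y
    rw [← map_mul, ← map_one (Ideal.Quotient.mk _), Ideal.Quotient.eq] at hy
    refine maxIdeal_ne_top p ((Ideal.eq_top_iff_one _).2 ?_)
    have h1 : PowerSeries.X * g - 1 ∈ maxIdeal p :=
      Ideal.span_mono (by simp) hy
    have h2 : PowerSeries.X * g ∈ maxIdeal p :=
      Ideal.mul_mem_right _ _ (Ideal.subset_span (by simp))
    simpa using sub_mem h2 h1

theorem finite_quotient_span {s : IwasawaAlgebra p} (hs : s ∉ Ideal.span {(p : IwasawaAlgebra p)}) :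
    Module.Finite ℤ_[p] (IwasawaAlgebra p ⧸ Ideal.span {s}) := by
  rw [mem_span_p_iff] at hs
  let n := (s.map (IsLocalRing.residue ℤ_[p])).order.toNat
  let F : Polynomial.degreeLT ℤ_[p] n →ₗ[ℤ_[p]] IwasawaAlgebra p ⧸ Ideal.span {s} :=
    (Ideal.Quotient.mkₐ ℤ_[p] (Ideal.span {s})).toLinearMap ∘ₗ
      (Polynomial.coeToPowerSeries.algHom ℤ_[p]).toLinearMap ∘ₗ
      (Polynomial.degreeLT ℤ_[p] n).subtype
  have : Module.Finite ℤ_[p] (Polynomial.degreeLT ℤ_[p] n) :=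
    .equiv (Polynomial.degreeLTEquiv ℤ_[p] n).symm
  refine .of_surjective F fun x ↦ ?_
  obtain ⟨f, rfl⟩ := Ideal.Quotient.mk_surjective x
  obtain ⟨q, r, h⟩ := PowerSeries.exists_isWeierstrassDivision f hs
  refine ⟨⟨r, Polynomial.mem_degreeLT.2 h.degree_lt⟩, ?_⟩
  change Ideal.Quotient.mk _ (Polynomial.coeToPowerSeries.algHom ℤ_[p] r) = _
  rw [Ideal.Quotient.eq, h.eq_mul_add, Polynomial.coeToPowerSeries.algHom_apply]
  simpa using Ideal.mul_mem_right q _ (Ideal.mem_span_singleton_self s)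

variable {p} {M : Type*} [AddCommGroup M] [Module (IwasawaAlgebra p) M]

theorem finite_padicInt_of_smul_eq_zero [Module ℤ_[p] M] [IsScalarTower ℤ_[p] (IwasawaAlgebra p) M]
    [Module.Finite (IwasawaAlgebra p) M] {s : IwasawaAlgebra p}
    (hs : s ∉ Ideal.span {(p : IwasawaAlgebra p)}) (h : ∀ x : M, s • x = 0) :
    Module.Finite ℤ_[p] M := by
  have ht : Module.IsTorsionBy (IwasawaAlgebra p) M s := fun x ↦ h x
  let : Module (IwasawaAlgebra p ⧸ Ideal.span {s}) M :=
    ((Module.isTorsionBySet_span_singleton_iff s).2 ht).module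
  have : IsScalarTower (IwasawaAlgebra p) (IwasawaAlgebra p ⧸ Ideal.span {s}) M :=
    Module.IsTorsionBySet.isScalarTower ((Module.isTorsionBySet_span_singleton_iff s).2 ht)
  have : IsScalarTower ℤ_[p] (IwasawaAlgebra p ⧸ Ideal.span {s}) M :=
    Module.IsTorsionBySet.isScalarTower ((Module.isTorsionBySet_span_singleton_iff s).2 ht)
  have := finite_quotient_span p hs
  have : Module.Finite (IwasawaAlgebra p ⧸ Ideal.span {s}) M :=
    .of_restrictScalars_finite (IwasawaAlgebra p) _ _
  exact .trans (IwasawaAlgebra p ⧸ Ideal.span {s}) M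

theorem finite_of_smul_eq_zero [Module.Finite (IwasawaAlgebra p) M] {s : IwasawaAlgebra p}
    (hs : s ∉ Ideal.span {(p : IwasawaAlgebra p)}) (h : ∀ x : M, s • x = 0)
    (hp : ∀ x : M, (p : IwasawaAlgebra p) • x = 0) : Finite M := by
  let : Module ℤ_[p] M := Module.compHom M (algebraMap ℤ_[p] (IwasawaAlgebra p))
  have : IsScalarTower ℤ_[p] (IwasawaAlgebra p) M := .of_algebraMap_smul fun _ _ ↦ rfl
  have := finite_padicInt_of_smul_eq_zero hs h
  have hI : Module.IsTorsionBySet ℤ_[p] M (IsLocalRing.maximalIdeal ℤ_[p]) := by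
    rw [PadicInt.maximalIdeal_eq_span_p, Module.isTorsionBySet_span_singleton_iff]
    intro x
    rw [← hp x, ← algebraMap_smul (IwasawaAlgebra p), map_natCast]
  let : Module (IsLocalRing.ResidueField ℤ_[p]) M := hI.module
  have : IsScalarTower ℤ_[p] (IsLocalRing.ResidueField ℤ_[p]) M :=
    Module.IsTorsionBySet.isScalarTower hI
  have : Module.Finite (IsLocalRing.ResidueField ℤ_[p]) M := .of_restrictScalars_finite ℤ_[p] _ _
  have : Finite (IsLocalRing.ResidueField ℤ_[p]) :=
    Finite.of_equiv _ (PadicInt.residueField (p := p)).symm.toEquiv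
  exact Module.finite_of_finite (IsLocalRing.ResidueField ℤ_[p])

theorem generatedBy_torsionBy [Module.Finite (IwasawaAlgebra p) M]
    (h : ∀ s ∉ Ideal.span {(p : IwasawaAlgebra p)}, ∀ x : M,
      (p : IwasawaAlgebra p) • x = 0 → s • x = 0 → x = 0) :
    GeneratedBy (IwasawaAlgebra p) (Submodule.torsionBy (IwasawaAlgebra p) M p)
      (Module.rank (OmegaAlgebra p) (Submodule.torsionBy (IwasawaAlgebra p) M p)) := by
  have : Module.Finite (OmegaAlgebra p) (Submodule.torsionBy (IwasawaAlgebra p) M p) :=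
    .of_restrictScalars_finite (IwasawaAlgebra p) _ _
  have : Module.IsTorsionFree (OmegaAlgebra p) (Submodule.torsionBy (IwasawaAlgebra p) M p) := by
    refine .of_smul_eq_zero fun r x hrx ↦ ?_
    obtain ⟨s, rfl⟩ := Ideal.Quotient.mk_surjective r
    rw [or_iff_not_imp_left, Ideal.Quotient.eq_zero_iff_mem]
    exact fun hs ↦ Subtype.ext (h s hs x x.2 (congrArg Subtype.val hrx))
  exact .of_quotient (Ideal.span {(p : IwasawaAlgebra p)}) (.of_free (R := OmegaAlgebra p))

theorem generatedBy_rank_padicInt [Module ℤ_[p] M] [IsScalarTower ℤ_[p] (IwasawaAlgebra p) M]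
    [Module.Finite (IwasawaAlgebra p) M] {s : IwasawaAlgebra p}
    (hs : s ∉ Ideal.span {(p : IwasawaAlgebra p)}) (h : ∀ x : M, s • x = 0)
    (hp : ∀ x : M, (p : IwasawaAlgebra p) • x = 0 → x = 0) :
    GeneratedBy (IwasawaAlgebra p) M (Module.rank ℤ_[p] M) := by
  have := finite_padicInt_of_smul_eq_zero hs h
  have hp' : ∀ (n : ℕ) (x : M), (p : ℤ_[p]) ^ n • x = 0 → x = 0 := by
    intro n
    induction n with
    | zero => simp
    | succ n ih =>
      intro x hx
      rw [pow_succ, mul_smul] at hx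
      apply hp
      rw [← map_natCast (algebraMap ℤ_[p] (IwasawaAlgebra p)), algebraMap_smul]
      exact ih _ hx
  have : Module.IsTorsionFree ℤ_[p] M := by
    refine .of_smul_eq_zero fun r x hrx ↦ ?_
    rw [or_iff_not_imp_left]
    intro hr
    rw [PadicInt.unitCoeff_spec hr, mul_smul] at hrx
    exact hp' _ x ((PadicInt.unitCoeff hr).isUnit.smul_eq_zero.1 hrx)
  exact .of_free

theorem eq_zero_of_smul_eq_zero_of_finite_eq_bot
    (hfin : ∀ N : Submodule (IwasawaAlgebra p) M, (N : Set M).Finite → N = ⊥)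
    {s : IwasawaAlgebra p} (hs : s ∉ Ideal.span {(p : IwasawaAlgebra p)}) {x : M}
    (hpx : (p : IwasawaAlgebra p) • x = 0) (hsx : s • x = 0) : x = 0 := by
  have key : ∀ {r : IwasawaAlgebra p}, r • x = 0 →
      ∀ y : Submodule.span (IwasawaAlgebra p) {x}, r • y = 0 := by
    rintro r hr ⟨y, hy⟩
    obtain ⟨c, rfl⟩ := Submodule.mem_span_singleton.1 hy
    ext
    simp [smul_comm r c x, hr]
  have : Finite (Submodule.span (IwasawaAlgebra p) {x}) :=
    finite_of_smul_eq_zero hs (key hsx) (key hpx)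
  exact Submodule.span_singleton_eq_bot.1 (hfin _ (Set.toFinite _))

theorem lambdaInv_eq_rank (X : Type) [AddCommGroup X] [Module ℤ_[p] X] :
    lambdaInv p X = Module.rank ℤ_[p] X := by
  rw [lambdaInv, IsLocalization.rank_eq ℚ_[p] (nonZeroDivisors ℤ_[p]) le_rfl]
  exact IsLocalizedModule.rank_eq (nonZeroDivisors ℤ_[p]) le_rfl
    (TensorProduct.mk ℤ_[p] ℚ_[p] X 1)

theorem muInv_eq_sum_rank (X : Type) [AddCommGroup X] [Module (IwasawaAlgebra p) X] :
    muInv p X = Cardinal.sum fun i ↦ Module.rank (OmegaAlgebra p) (pGraded p X i) := by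
  rw [muInv]
  congr! 2 with i
  rw [IsLocalization.rank_eq (FractionRing (OmegaAlgebra p)) (nonZeroDivisors (OmegaAlgebra p))
    le_rfl]
  exact IsLocalizedModule.rank_eq (nonZeroDivisors (OmegaAlgebra p)) le_rfl
    (TensorProduct.mk (OmegaAlgebra p) (FractionRing (OmegaAlgebra p)) (pGraded p X i) 1)

theorem GeneratedBy.of_smul [Module.Finite (IwasawaAlgebra p) M] {s : IwasawaAlgebra p}
    (hs : s ∉ Ideal.span {(p : IwasawaAlgebra p)}) {k : ℕ}
    (hk : ∀ x : M, ((p : IwasawaAlgebra p) ^ k * s) • x = 0)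
    (htf : ∀ s ∉ Ideal.span {(p : IwasawaAlgebra p)}, ∀ x : M,
      (p : IwasawaAlgebra p) • x = 0 → s • x = 0 → x = 0)
    (N : Submodule (IwasawaAlgebra p) M) {c : Cardinal}
    (hc : GeneratedBy (IwasawaAlgebra p) ((p : IwasawaAlgebra p) • N : Submodule _ M) c) :
    GeneratedBy (IwasawaAlgebra p) N (Module.rank (OmegaAlgebra p)
      (N ⧸ (Ideal.span {(p : IwasawaAlgebra p)} • (⊤ : Submodule (IwasawaAlgebra p) N))) + c) := by
  refine .of_surjective (smulRestrict (p : IwasawaAlgebra p) N) (smulRestrict_surjective _ N) ?_ hc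
  have hker : LinearMap.ker (smulRestrict (p : IwasawaAlgebra p) N) =
      Submodule.torsionBy (IwasawaAlgebra p) N p := by
    ext x
    rw [LinearMap.mem_ker, Submodule.mem_torsionBy_iff, Subtype.ext_iff, Subtype.ext_iff]
    rfl
  rw [hker]
  refine (generatedBy_torsionBy fun t ht x hx htx ↦ Subtype.ext
    (htf t ht x (congrArg Subtype.val hx) (congrArg Subtype.val htx))).mono ?_
  exact rank_torsionBy_le _ hs k N fun x ↦ Subtype.ext (hk x)

theorem exists_pow_mul_smul_eq_zero [Module.Finite (IwasawaAlgebra p) M]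
    (htors : Module.IsTorsion (IwasawaAlgebra p) M) :
    ∃ (k : ℕ) (s : IwasawaAlgebra p), s ∉ Ideal.span {(p : IwasawaAlgebra p)} ∧
      ∀ x : M, ((p : IwasawaAlgebra p) ^ k * s) • x = 0 := by
  obtain ⟨f, hf, hf0⟩ := Submodule.annihilator_top_inter_nonZeroDivisors htors
  have hu : ¬IsUnit (p : IwasawaAlgebra p) := fun hu ↦
    maxIdeal_ne_top p (Ideal.eq_top_of_isUnit_mem _ (Ideal.subset_span (by simp)) hu)
  obtain ⟨s, hs, hns⟩ := (FiniteMultiplicity.of_not_isUnit hu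
    (nonZeroDivisors.ne_zero hf0)).exists_eq_pow_mul_and_not_dvd
  exact ⟨_, s, by rwa [Ideal.mem_span_singleton],
    fun x ↦ hs ▸ Submodule.mem_annihilator.1 hf x trivial⟩

end Iwasawa

theorem mu_add_lambda_ge_g (p : ℕ) [Fact p.Prime] (hp : Odd p)
    (X : Type) [AddCommGroup X] [Module (IwasawaAlgebra p) X]
    [Module ℤ_[p] X] [IsScalarTower ℤ_[p] (IwasawaAlgebra p) X]
    [Module.Finite (IwasawaAlgebra p) X]
    (htors : Module.IsTorsion (IwasawaAlgebra p) X)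
    (hfin : ∀ N : Submodule (IwasawaAlgebra p) X, (N : Set X).Finite → N = ⊥) :
    gInv p X ≤ muInv p X + lambdaInv p X := by
  obtain ⟨k, s, hs, hk⟩ := exists_pow_mul_smul_eq_zero htors
  have htf : ∀ t ∉ Ideal.span {(p : IwasawaAlgebra p)}, ∀ x : X,
      (p : IwasawaAlgebra p) • x = 0 → t • x = 0 → x = 0 :=
    fun t ht x ↦ eq_zero_of_smul_eq_zero_of_finite_eq_bot hfin ht
  have hstep (i : ℕ) : pPowSub p X (i + 1) = (p : IwasawaAlgebra p) • pPowSub p X i := by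
    rw [pPowSub, pPowSub, pow_succ', mul_smul]
  have hgen (n : ℕ) (c : Cardinal) (h : GeneratedBy (IwasawaAlgebra p) (pPowSub p X n) c) :
      GeneratedBy (IwasawaAlgebra p) (pPowSub p X 0)
        (∑ i ∈ Finset.range n, Module.rank (OmegaAlgebra p) (pGraded p X i) + c) := by
    induction n generalizing c with
    | zero => simpa using h
    | succ n ih =>
      rw [hstep] at h
      rw [Finset.sum_range_succ, add_assoc]
      exact ih _ (.of_smul hs hk htf _ h)
  have hsk (x : pPowSub p X k) : s • x = 0 := by
    obtain ⟨_, y, -, rfl⟩ := x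
    ext
    have := hk y
    rw [mul_comm, mul_smul] at this
    exact this
  have hlam := generatedBy_rank_padicInt hs hsk fun x hx ↦ Subtype.ext
    (htf s hs x (congrArg Subtype.val hx) (congrArg Subtype.val (hsk x)))
  have hle : Module.rank ℤ_[p] (pPowSub p X k) ≤ lambdaInv p X := by
    rw [lambdaInv_eq_rank]
    exact LinearMap.rank_le_of_injective ((pPowSub p X k).subtype.restrictScalars ℤ_[p])
      Subtype.val_injective
  have hmu : ∑ i ∈ Finset.range k, Module.rank (OmegaAlgebra p) (pGraded p X i) ≤ muInv p X := by
    rw [muInv_eq_sum_rank]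
    exact Cardinal.sum_range_le_sum _ k
  have htop : pPowSub p X 0 = ⊤ := by rw [pPowSub, pow_zero, one_smul]
  have hX := (hgen k _ hlam).map (pPowSub p X 0).subtype
    (by rw [← LinearMap.range_eq_top, Submodule.range_subtype, htop])
  exact (hX.rank_quotient_le (maxIdeal p)).trans (add_le_add hmu hle)
end

section
/- Let p be an odd prime, Λ = ℤ_p⟦T⟧, and 𝔐 = (p, T) its maximal ideal. Let X be a finitely generated Λ-module that is annihilated by p^n for some n ≥ 1 and contains no nonzero finite Λ-submodules. Then μ(X) ≥ dim_{𝔽_p}(X/𝔐X), where μ(X) = Σ_{i=0}^∞ rank_{𝔽_p⟦T⟧}(p^i X / p^{i+1} X). -/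
open Pointwise TensorProduct

set_option synthInstance.maxHeartbeats 1000000
set_option maxHeartbeats 1000000

section EulerCharacteristic

variable {R : Type*} [CommRing R]

/-- Additivity of the Euler characteristic `length (M / tM) - length M[t]` along a short exact
sequence whose middle term has no `t`-torsion. -/
theorem length_quotSMulTop_add_length_torsionBy_of_exact {N M Q : Type*}
    [AddCommGroup N] [Module R N] [AddCommGroup M] [Module R M] [AddCommGroup Q] [Module R Q]
    (t : R) (f : N →ₗ[R] M) (g : M →ₗ[R] Q) (hf : Function.Injective f)
    (hg : Function.Surjective g) (hfg : Function.Exact f g)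
    (ht : Function.Injective fun x : M => t • x) :
    Module.length R (QuotSMulTop t M) + Module.length R (Submodule.torsionBy R Q t) =
      Module.length R (QuotSMulTop t N) + Module.length R (QuotSMulTop t Q) := by
  have hK : Function.Exact (Submodule.torsionBy R Q t).subtype (LinearMap.lsmul R Q t) :=
    LinearMap.exact_subtype_ker_map _
  have hbot : Function.Exact (0 : PUnit →ₗ[R] M) (LinearMap.lsmul R M t) := by
    intro y
    constructor
    · intro h
      exact ⟨0, (ht (by simpa using! h)).symm⟩
    · rintro ⟨x, rfl⟩
      simp
  let δ := SnakeLemma.δ' (LinearMap.lsmul R N t) (LinearMap.lsmul R M t) (LinearMap.lsmul R Q t)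
    f g hfg f g hfg (by ext; simp) (by ext; simp) (Submodule.torsionBy R Q t).subtype hK
    (Submodule.mkQ (t • ⊤ : Submodule R N))
    (by intro y; simp [Submodule.mem_smul_pointwise_iff_exists]) hg hf
  have hδ₁ : Function.Exact (0 : PUnit →ₗ[R] Submodule.torsionBy R Q t) δ :=
    SnakeLemma.exact_δ'_right _ _ _ _ _ _ _ _ _ _ _ 0 hbot _ _ _ _ _ _ _ (by simp)
      (Submodule.subtype_injective _)
  have hδ₂ : Function.Exact δ (QuotSMulTop.map t f) :=
    SnakeLemma.exact_δ'_left _ _ _ _ _ _ _ _ _ _ _ _ _ _ _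
      (Submodule.mkQ (t • ⊤ : Submodule R M))
      (by intro y; simp [Submodule.mem_smul_pointwise_iff_exists]) _ _ _
      (QuotSMulTop.map_comp_mkQ t f) (Submodule.mkQ_surjective _)
  have hδ : Function.Injective δ := by
    rw [injective_iff_map_eq_zero]
    intro x hx
    obtain ⟨y, rfl⟩ := (hδ₁ x).mp hx
    rfl
  have hfg' := QuotSMulTop.map_exact t hfg hg
  have e₁ := Module.length_eq_add_of_exact δ (QuotSMulTop.map t f).rangeRestrict hδ
    (LinearMap.surjective_rangeRestrict _)
    (by intro y; rw [← hδ₂ y]; simp [Subtype.ext_iff])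
  have e₂ := Module.length_eq_add_of_exact (LinearMap.range (QuotSMulTop.map t f)).subtype
    (QuotSMulTop.map t g) (Submodule.subtype_injective _) (QuotSMulTop.map_surjective t hg)
    (by intro y; rw [hfg' y]; simp)
  rw [e₁, e₂]
  ring

theorem length_quotSMulTop_pi (t : R) [IsSimpleModule R (R ⧸ Ideal.span {t})] (k : ℕ) :
    Module.length R (QuotSMulTop t (Fin k → R)) = k := by
  rw [((QuotSMulTop.equivQuotTensor t (Fin k → R)).trans
    ((TensorProduct.piScalarRight R R (R ⧸ Ideal.span {t}) (Fin k)))).length_eq]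
  simp

theorem length_quotSMulTop_of_free [StrongRankCondition R] (t : R)
    [IsSimpleModule R (R ⧸ Ideal.span {t})]
    (M : Type*) [AddCommGroup M] [Module R M] [Module.Free R M] [Module.Finite R M] :
    Module.length R (QuotSMulTop t M) = Module.finrank R M := by
  rw [(QuotSMulTop.congr t (Module.finBasis R M).equivFun).length_eq, length_quotSMulTop_pi]

/-- Over a principal ideal domain with prime element `t`, the Euler characteristic of a finite
module with respect to `t` is its rank. -/
theorem length_quotSMulTop_eq_length_torsionBy_add_finrank [IsDomain R] [IsPrincipalIdealRing R]
    {t : R} (ht : t ≠ 0) [IsSimpleModule R (R ⧸ Ideal.span {t})]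
    (Q : Type*) [AddCommGroup Q] [Module R Q] [Module.Finite R Q] :
    Module.length R (Submodule.torsionBy R Q t) ≠ ⊤ ∧
    Module.length R (QuotSMulTop t Q) =
      Module.length R (Submodule.torsionBy R Q t) + Module.finrank R Q := by
  obtain ⟨m, π, hπ⟩ := Module.Finite.exists_fin' R Q
  have key := length_quotSMulTop_add_length_torsionBy_of_exact t (LinearMap.ker π).subtype π
    (Submodule.subtype_injective _) hπ (LinearMap.exact_subtype_ker_map π)
    (smul_right_injective _ ht)
  have hrank := Submodule.finrank_quotient_add_finrank (LinearMap.ker π)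
  rw [(π.quotKerEquivOfSurjective hπ).finrank_eq, Module.finrank_fin_fun] at hrank
  have hle := Module.length_le_of_surjective _ (QuotSMulTop.map_surjective t hπ)
  rw [length_quotSMulTop_pi] at hle key
  rw [length_quotSMulTop_of_free] at key
  lift Module.length R (QuotSMulTop t Q) to ℕ using ne_top_of_le_ne_top (ENat.natCast_ne_top m) hle
    with b
  have ha : Module.length R (Submodule.torsionBy R Q t) ≠ ⊤ := by
    intro h
    rw [h, add_top] at key
    exact ENat.natCast_ne_top _ (by exact_mod_cast key.symm)
  refine ⟨ha, ?_⟩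
  lift Module.length R (Submodule.torsionBy R Q t) to ℕ using ha with a
  norm_cast at key ⊢
  omega

end EulerCharacteristic

section ChangeOfRings

variable {S R : Type*} [CommRing S] [CommRing R] [Algebra S R] {Q : Type*} [AddCommGroup Q]
  [Module S Q] [Module R Q] [IsScalarTower S R Q]

theorem length_quotSMulTop_algebraMap (h : Function.Surjective (algebraMap S R)) (s : S) :
    Module.length S (QuotSMulTop s Q) =
      Module.length R (QuotSMulTop (algebraMap S R s) Q) := by
  rw [← Module.length_eq_of_surjective (S := S) h]
  refine LinearEquiv.length_eq (Submodule.quotEquivOfEq _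
    ((algebraMap S R s • (⊤ : Submodule R Q)).restrictScalars S) ?_ ≪≫ₗ
      Submodule.Quotient.restrictScalarsEquiv S _)
  ext x
  simp [Submodule.mem_smul_pointwise_iff_exists]

theorem length_torsionBy_algebraMap (h : Function.Surjective (algebraMap S R)) (s : S) :
    Module.length S (Submodule.torsionBy S Q s) =
      Module.length R (Submodule.torsionBy R Q (algebraMap S R s)) := by
  rw [← Module.length_eq_of_surjective (S := S) h]
  have : Submodule.torsionBy S Q s =
      (Submodule.torsionBy R Q (algebraMap S R s)).restrictScalars S := by
    ext x
    simp
  rw [this]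
  rfl

end ChangeOfRings

/-- A partial sum of a sequence of cardinals is at most its total sum. -/
theorem sum_range_le_cardinalSum (f : ℕ → Cardinal.{0}) (n : ℕ) :
    ∑ i ∈ Finset.range n, f i ≤ Cardinal.sum f := by
  induction n generalizing f with
  | zero => simp
  | succ n ih =>
    rw [Finset.sum_range_succ', Cardinal.sum_nat_eq_add_sum_succ, add_comm]
    gcongr
    exact ih _

section IwasawaAlgebra

variable (p : ℕ) [Fact p.Prime]

/-- Reduction modulo `p` of the coefficients, `ℤ_p⟦T⟧ → 𝔽_p⟦T⟧`. -/
noncomputable def reductionModP : IwasawaAlgebra p →+* PowerSeries (ZMod p) :=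
  PowerSeries.map PadicInt.toZMod

theorem reductionModP_surjective : Function.Surjective (reductionModP p) :=
  PowerSeries.map_surjective _ (ZMod.ringHom_surjective _)

theorem ker_reductionModP :
    RingHom.ker (reductionModP p) = Ideal.span {(p : IwasawaAlgebra p)} := by
  ext f
  rw [Ideal.mem_span_singleton, RingHom.mem_ker]
  constructor
  · intro h
    have hc (k : ℕ) : (p : ℤ_[p]) ∣ PowerSeries.coeff k f := by
      rw [← Ideal.mem_span_singleton, ← PadicInt.maximalIdeal_eq_span_p, ← PadicInt.ker_toZMod,
        RingHom.mem_ker, ← PowerSeries.coeff_map]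
      exact (congrArg (PowerSeries.coeff k) h).trans (map_zero _)
    choose g hg using hc
    refine ⟨PowerSeries.mk g, ?_⟩
    ext k
    rw [← map_natCast PowerSeries.C p, PowerSeries.coeff_C_mul, PowerSeries.coeff_mk, hg]
  · rintro ⟨g, rfl⟩
    rw [map_mul, map_natCast, ← map_natCast PowerSeries.C, ZMod.natCast_self, map_zero, zero_mul]

/-- The isomorphism `Λ/pΛ ≅ 𝔽_p⟦T⟧`. -/
noncomputable def omegaEquiv : OmegaAlgebra p ≃+* PowerSeries (ZMod p) :=
  (Ideal.quotEquivOfEq (ker_reductionModP p).symm).trans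
    (RingHom.quotientKerEquivOfSurjective (reductionModP_surjective p))

instance : IsDomain (OmegaAlgebra p) :=
  (omegaEquiv p).toMulEquiv.isDomain _

instance inst_s1 : IsPrincipalIdealRing (OmegaAlgebra p) :=
  IsPrincipalIdealRing.of_surjective (omegaEquiv p).symm.toRingHom (omegaEquiv p).symm.surjective

/-- The class of `T` in `Λ/pΛ`. -/
noncomputable abbrev omegaX : OmegaAlgebra p :=
  algebraMap (IwasawaAlgebra p) (OmegaAlgebra p) PowerSeries.X

theorem omegaEquiv_omegaX : omegaEquiv p (omegaX p) = PowerSeries.X := by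
  change reductionModP p PowerSeries.X = _
  exact PowerSeries.map_X _

theorem omegaX_ne_zero : omegaX p ≠ 0 := by
  intro h
  have := omegaEquiv_omegaX p
  rw [h, map_zero] at this
  exact PowerSeries.X_ne_zero this.symm

theorem ker_toZMod_comp_constantCoeff :
    RingHom.ker ((PadicInt.toZMod (p := p)).comp PowerSeries.constantCoeff) = maxIdeal p := by
  ext f
  rw [RingHom.mem_ker, maxIdeal, Ideal.mem_span_pair, RingHom.comp_apply, ← RingHom.mem_ker,
    PadicInt.ker_toZMod, PadicInt.maximalIdeal_eq_span_p, Ideal.mem_span_singleton]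
  constructor
  · rintro ⟨c, hc⟩
    obtain ⟨g, hg⟩ := PowerSeries.X_dvd_iff.mpr
      (show PowerSeries.constantCoeff (f - PowerSeries.C (p * c)) = 0 by simp [hc])
    refine ⟨PowerSeries.C c, g, ?_⟩
    rw [mul_comm g, ← hg, ← map_natCast PowerSeries.C, ← map_mul, mul_comm c]
    ring
  · rintro ⟨a, b, rfl⟩
    exact ⟨PowerSeries.constantCoeff a, by simp [mul_comm]⟩

instance : (maxIdeal p).IsMaximal :=
  ker_toZMod_comp_constantCoeff p ▸ RingHom.ker_isMaximal_of_surjective _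
    (ZMod.ringHom_surjective _)

instance : IsSimpleModule (OmegaAlgebra p) (OmegaAlgebra p ⧸ Ideal.span {omegaX p}) := by
  have h : Ideal.map (algebraMap (IwasawaAlgebra p) (OmegaAlgebra p)) (maxIdeal p) =
      Ideal.span {omegaX p} := by
    have h0 : algebraMap (IwasawaAlgebra p) (OmegaAlgebra p) p = 0 :=
      Ideal.Quotient.eq_zero_iff_mem.mpr (Ideal.mem_span_singleton_self _)
    rw [maxIdeal, Ideal.map_span, Set.image_pair, h0, Ideal.span_insert_zero]
  rw [isSimpleModule_iff_isCoatom, ← Ideal.isMaximal_def, ← h]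
  refine Ideal.IsMaximal.map_of_surjective_of_ker_le Ideal.Quotient.mk_surjective ?_
  rw [Ideal.mk_ker]
  exact Ideal.span_mono (by simp)

theorem rank_fractionRing_tensor (Q : Type) [AddCommGroup Q] [Module (OmegaAlgebra p) Q]
    [Module.Finite (OmegaAlgebra p) Q] :
    Module.rank (FractionRing (OmegaAlgebra p)) (FractionRing (OmegaAlgebra p) ⊗[OmegaAlgebra p] Q)
      = (Module.finrank (OmegaAlgebra p) Q : Cardinal) := by
  rw [Module.finrank_eq_rank, IsLocalization.rank_eq (FractionRing (OmegaAlgebra p))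
    (nonZeroDivisors (OmegaAlgebra p)) le_rfl]
  exact IsLocalizedModule.rank_eq (nonZeroDivisors (OmegaAlgebra p)) le_rfl
    (TensorProduct.mk (OmegaAlgebra p) (FractionRing (OmegaAlgebra p)) Q 1)

theorem length_quotSMulTop_X_eq (Q : Type) [AddCommGroup Q] [Module (IwasawaAlgebra p) Q]
    [Module (OmegaAlgebra p) Q] [IsScalarTower (IwasawaAlgebra p) (OmegaAlgebra p) Q]
    [Module.Finite (IwasawaAlgebra p) Q] :
    Module.length (IwasawaAlgebra p)
      (Submodule.torsionBy (IwasawaAlgebra p) Q PowerSeries.X) ≠ ⊤ ∧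
    Module.length (IwasawaAlgebra p) (QuotSMulTop (PowerSeries.X : IwasawaAlgebra p) Q) =
      Module.length (IwasawaAlgebra p)
        (Submodule.torsionBy (IwasawaAlgebra p) Q PowerSeries.X) +
      Module.finrank (OmegaAlgebra p) Q := by
  have : Module.Finite (OmegaAlgebra p) Q :=
    Module.Finite.of_restrictScalars_finite (IwasawaAlgebra p) _ _
  have h : Function.Surjective (algebraMap (IwasawaAlgebra p) (OmegaAlgebra p)) :=
    Ideal.Quotient.mk_surjective
  rw [length_quotSMulTop_algebraMap h, length_torsionBy_algebraMap h]
  exact length_quotSMulTop_eq_length_torsionBy_add_finrank (omegaX_ne_zero p) Q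

theorem finite_of_X_smul_of_pow_smul (n : ℕ) (N : Type) [AddCommGroup N]
    [Module (IwasawaAlgebra p) N] [Module.Finite (IwasawaAlgebra p) N]
    (hX : ∀ x : N, (PowerSeries.X : IwasawaAlgebra p) • x = 0)
    (hp : ∀ x : N, (p : IwasawaAlgebra p) ^ n • x = 0) : Finite N := by
  let φ : IwasawaAlgebra p →+* ZMod (p ^ n) :=
    (PadicInt.toZModPow n).comp PowerSeries.constantCoeff
  have : NeZero (p ^ n) := ⟨pow_ne_zero _ (Fact.out : p.Prime).ne_zero⟩
  have : Finite (IwasawaAlgebra p ⧸ RingHom.ker φ) :=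
    Finite.of_injective _ (RingHom.kerLift_injective φ)
  have ht : Module.IsTorsionBySet (IwasawaAlgebra p) N (RingHom.ker φ) := by
    rintro x ⟨f, hf⟩
    have hf' : PowerSeries.constantCoeff f ∈ RingHom.ker (PadicInt.toZModPow (p := p) n) := hf
    rw [PadicInt.ker_toZModPow, Ideal.mem_span_singleton] at hf'
    obtain ⟨c, hc⟩ := hf'
    obtain ⟨g, hg⟩ := PowerSeries.X_dvd_iff.mpr
      (show PowerSeries.constantCoeff (f - PowerSeries.C (p ^ n * c)) = 0 by simp [hc])
    rw [sub_eq_iff_eq_add, mul_comm, map_mul, map_pow, map_natCast,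
      mul_comm _ (PowerSeries.C c)] at hg
    simp only [hg, add_smul, mul_smul, hX, hp, smul_zero, add_zero]
  let := ht.module
  have : IsScalarTower (IwasawaAlgebra p) (IwasawaAlgebra p ⧸ RingHom.ker φ) N := ht.isScalarTower
  have : Module.Finite (IwasawaAlgebra p ⧸ RingHom.ker φ) N :=
    Module.Finite.of_restrictScalars_finite (IwasawaAlgebra p) _ _
  exact Module.finite_of_finite (IwasawaAlgebra p ⧸ RingHom.ker φ)

variable (X : Type) [AddCommGroup X] [Module (IwasawaAlgebra p) X]

theorem mem_pPowSub {i : ℕ} {x : X} :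
    x ∈ pPowSub p X i ↔ ∃ y : X, (p : IwasawaAlgebra p) ^ i • y = x := by
  simp [pPowSub, Submodule.mem_smul_pointwise_iff_exists]

theorem pPowSub_succ_le (i : ℕ) : pPowSub p X (i + 1) ≤ pPowSub p X i := by
  intro x hx
  obtain ⟨y, rfl⟩ := (mem_pPowSub p X).mp hx
  exact (mem_pPowSub p X).mpr ⟨(p : IwasawaAlgebra p) • y, by rw [pow_succ, mul_smul]⟩

theorem exact_inclusion_pPowSub (i : ℕ) :
    Function.Exact (Submodule.inclusion (pPowSub_succ_le p X i))
      (Submodule.mkQ (Ideal.span {(p : IwasawaAlgebra p)} •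
        (⊤ : Submodule (IwasawaAlgebra p) (pPowSub p X i)))) := by
  rintro ⟨x, hx⟩
  rw [Submodule.mkQ_apply, Submodule.Quotient.mk_eq_zero, Submodule.ideal_span_singleton_smul,
    Submodule.mem_smul_pointwise_iff_exists]
  constructor
  · rintro ⟨⟨y, hy⟩, -, h⟩
    obtain ⟨z, rfl⟩ := (mem_pPowSub p X).mp hy
    refine ⟨⟨x, (mem_pPowSub p X).mpr ⟨z, ?_⟩⟩, rfl⟩
    rw [pow_succ', mul_smul]
    exact congrArg Subtype.val h
  · rintro ⟨⟨y, hy⟩, h⟩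
    obtain ⟨z, rfl⟩ := (mem_pPowSub p X).mp hy
    refine ⟨⟨_, (mem_pPowSub p X).mpr ⟨z, rfl⟩⟩, trivial, ?_⟩
    rw [← h]
    ext
    simp [pow_succ', mul_smul]

theorem toENat_gInv_le :
    Cardinal.toENat (gInv p X) ≤ Module.length (IwasawaAlgebra p)
      (QuotSMulTop (PowerSeries.X : IwasawaAlgebra p) X) := by
  let := Ideal.Quotient.field (maxIdeal p)
  rw [gInv, ← Module.length_eq_rank, ← Module.length_eq_of_surjective (S := IwasawaAlgebra p)
    Ideal.Quotient.mk_surjective]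
  refine Module.length_le_of_surjective (Submodule.factor ?_) (Submodule.factor_surjective _)
  rw [← Submodule.ideal_span_singleton_smul]
  exact Submodule.smul_mono_left (Ideal.span_mono (by simp))

variable [Module.Finite (IwasawaAlgebra p) X]

theorem length_quotSMulTop_pPowSub
    (hX : Function.Injective fun x : X => (PowerSeries.X : IwasawaAlgebra p) • x) (i : ℕ) :
    Module.length (IwasawaAlgebra p)
        (QuotSMulTop (PowerSeries.X : IwasawaAlgebra p) (pPowSub p X i)) =
      Module.length (IwasawaAlgebra p)
        (QuotSMulTop (PowerSeries.X : IwasawaAlgebra p) (pPowSub p X (i + 1))) +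
      Module.finrank (OmegaAlgebra p) (pGraded p X i) := by
  have key := length_quotSMulTop_add_length_torsionBy_of_exact
    (PowerSeries.X : IwasawaAlgebra p) _ _ (Submodule.inclusion_injective (pPowSub_succ_le p X i))
    (Submodule.mkQ_surjective _) (exact_inclusion_pPowSub p X i)
    (fun x y h => Subtype.ext (hX (congrArg Subtype.val h)))
  obtain ⟨hfin, hlen⟩ := length_quotSMulTop_X_eq p (pGraded p X i)
  rw [hlen, add_comm (Module.length (IwasawaAlgebra p) (Submodule.torsionBy _ _ _)),
    ← add_assoc] at key
  exact WithTop.add_right_cancel hfin key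

theorem length_quotSMulTop_X_eq_sum {n : ℕ}
    (hann : ∀ x : X, (p : IwasawaAlgebra p) ^ n • x = 0)
    (hX : Function.Injective fun x : X => (PowerSeries.X : IwasawaAlgebra p) • x) :
    Module.length (IwasawaAlgebra p) (QuotSMulTop (PowerSeries.X : IwasawaAlgebra p) X) =
      ∑ i ∈ Finset.range n, Module.finrank (OmegaAlgebra p) (pGraded p X i) := by
  have h (k : ℕ) : Module.length (IwasawaAlgebra p)
        (QuotSMulTop (PowerSeries.X : IwasawaAlgebra p) (pPowSub p X 0)) =
      Module.length (IwasawaAlgebra p)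
        (QuotSMulTop (PowerSeries.X : IwasawaAlgebra p) (pPowSub p X k)) +
      ∑ i ∈ Finset.range k, Module.finrank (OmegaAlgebra p) (pGraded p X i) := by
    induction k with
    | zero => simp
    | succ k ih =>
      rw [ih, length_quotSMulTop_pPowSub p X hX, Finset.sum_range_succ]
      push_cast
      ring
  have htop : pPowSub p X 0 = ⊤ := eq_top_iff.mpr fun x _ => (mem_pPowSub p X).mpr ⟨x, by simp⟩
  have : Subsingleton (pPowSub p X n) := by
    refine Submodule.subsingleton_iff_eq_bot.mpr (eq_bot_iff.mpr fun x hx => ?_)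
    obtain ⟨y, rfl⟩ := (mem_pPowSub p X).mp hx
    exact hann y
  rw [← (QuotSMulTop.congr _ (LinearEquiv.ofTop _ htop)).length_eq, h n,
    Module.length_eq_zero, zero_add]

variable {X} in
theorem X_smul_injective {n : ℕ} (hann : ∀ x : X, (p : IwasawaAlgebra p) ^ n • x = 0)
    (hfin : ∀ N : Submodule (IwasawaAlgebra p) X, (N : Set X).Finite → N = ⊥) :
    Function.Injective fun x : X => (PowerSeries.X : IwasawaAlgebra p) • x := by
  let N := Submodule.torsionBy (IwasawaAlgebra p) X PowerSeries.X
  have hN : Finite N := finite_of_X_smul_of_pow_smul p n N (fun x => Subtype.ext x.2)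
    fun x => Subtype.ext (hann x)
  have hbot : N = ⊥ := hfin N hN
  refine (injective_iff_map_eq_zero (LinearMap.lsmul (IwasawaAlgebra p) X PowerSeries.X)).mpr ?_
  intro x hx
  exact (Submodule.mem_bot (IwasawaAlgebra p)).mp (hbot ▸ (show x ∈ N from hx))

end IwasawaAlgebra

theorem mu_ge_g_of_pPow_torsion (p : ℕ) [Fact p.Prime] (hp : Odd p)
    (n : ℕ) (hn : 1 ≤ n)
    (X : Type) [AddCommGroup X] [Module (IwasawaAlgebra p) X]
    [Module.Finite (IwasawaAlgebra p) X]
    (hann : ∀ x : X, ((p : IwasawaAlgebra p) ^ n) • x = 0)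
    (hfin : ∀ N : Submodule (IwasawaAlgebra p) X, (N : Set X).Finite → N = ⊥) :
    gInv p X ≤ muInv p X := by
  have hX := X_smul_injective p hann hfin
  have hg := toENat_gInv_le p X
  rw [length_quotSMulTop_X_eq_sum p X hann hX, Cardinal.toENat_le_natCast] at hg
  refine hg.trans (le_trans (le_of_eq ?_) (sum_range_le_cardinalSum _ n))
  rw [Nat.cast_sum]
  refine Finset.sum_congr rfl fun i _ => ?_
  have : Module.Finite (OmegaAlgebra p) (pGraded p X i) :=
    Module.Finite.of_restrictScalars_finite (IwasawaAlgebra p) _ _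
  exact (rank_fractionRing_tensor p _).symm
end
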